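/- arXiv:2111.04387 — 2 statements merged into one kernel-verified Lean document; each statement's English description precedes it below -/
import Mathlib

section
/- Let t ≥ 3 be an odd square-free integer, let q be an odd prime and r a positive natural number, and set m = q^r. Then t divides the class number of the imaginary quadratic field ℚ(√(1 − 2m^t)). -/
open Polynomial NumberField

/-- A fixed choice of complex square root of the integer `d`. -/
noncomputable def sqrtC (d : ℤ) : ℂ := (d : ℂ) ^ ((1 : ℂ) / 2)

lemma sqrtC_sq (d : ℤ) : sqrtC d ^ 2 = (d : ℂ) := by
  unfold sqrtC
  rcases eq_or_ne (d : ℂ) 0 with h | h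
  · rw [h, Complex.zero_cpow (by norm_num : (1 : ℂ) / 2 ≠ 0)]
    simp
  · rw [pow_two, ← Complex.cpow_add _ _ h]
    norm_num

lemma isIntegral_sqrtC (d : ℤ) : IsIntegral ℚ (sqrtC d) := by
  refine ⟨X ^ 2 - C (d : ℚ), monic_X_pow_sub_C _ two_ne_zero, ?_⟩
  have : (Polynomial.aeval (sqrtC d)) (X ^ 2 - C (d : ℚ)) = 0 := by
    simp [sqrtC_sq]
  simpa [Polynomial.aeval_def] using this

/-- The (number) field `ℚ(√d)`, realized as a subfield of `ℂ`. -/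
noncomputable def Qsqrt (d : ℤ) : IntermediateField ℚ ℂ :=
  IntermediateField.adjoin ℚ {sqrtC d}

instance (d : ℤ) : FiniteDimensional ℚ (Qsqrt d) :=
  IntermediateField.adjoin.finiteDimensional (isIntegral_sqrtC d)

instance (d : ℤ) : NumberField (Qsqrt d) := ⟨⟩

/-!
Put `n = m ^ (t / p)` for a prime `p ∣ t`, `d = 1 - 2 m ^ t` and `β = 1 - m ^ t + √d`. The
conjugates of `β` are coprime with product `(m ^ 2) ^ t`, so `(β) = I ^ t` for an ideal `I`, and the
class of `I` has order exactly `t` unless, for some such `p`, `β` is a `p`-th power up to a unit.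
The units have order dividing `4`, so `β` would be a `p`-th power.

Such a root has real part `x ∈ ℤ` and imaginary part squared `k ∈ ℤ` with `x² + k = n²`, and its
powers have the same real parts as those of `x + √(-k)`. Reducing modulo `x + n` forces `x = 1 - n`
and `k = 2n - 1`, that is, the root is `γ = (1 - n) + √(1 - 2n)`. Since `2γ` is the square of
`δ = 1 + √(1 - 2n)`, the equation for `γ ^ p` becomes `Re(γ ^ h δ) = ±1` with `h = (p - 1) / 2`,
which is impossible: by a `2`-adic expansion for even `h`, by a congruence for odd `h`.
-/

lemma two_pow_mul_sq_dvd_one_add_four_mul_pow_sub {R : Type*} [CommRing R] (w : R)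
    {s k : ℕ} (h : 2 ^ s ∣ k) :
    2 ^ (s + 3) * w ^ 2 ∣ (1 + 4 * w) ^ k - (1 + 4 * k * w) := by
  induction s generalizing k with
  | zero =>
    obtain ⟨z, hz⟩ := powAddExpansion 1 (4 * w) k
    refine ⟨2 * z, ?_⟩
    rw [hz, one_pow, one_pow]
    ring
  | succ s ih =>
    obtain ⟨l, rfl⟩ : 2 ∣ k := (dvd_pow_self 2 s.succ_ne_zero).trans h
    obtain ⟨o, rfl⟩ : 2 ^ s ∣ l := by rwa [pow_succ', Nat.mul_dvd_mul_iff_left two_pos] at h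
    obtain ⟨z, hz⟩ := ih (dvd_mul_right (2 ^ s) o)
    refine ⟨2 ^ s * o ^ 2 + z * (1 + 4 * (2 ^ s * o) * w) + 2 ^ (s + 2) * w ^ 2 * z ^ 2, ?_⟩
    rw [mul_comm 2, pow_mul, sub_eq_iff_eq_add.mp hz]
    push_cast
    ring

lemma dvd_re_pow_sub_re_pow {d : ℤ} (z : ℤ√d) (k : ℕ) : d ∣ (z ^ k).re - z.re ^ k := by
  induction k with
  | zero => simp
  | succ k ih =>
    obtain ⟨c, hc⟩ := ih
    refine ⟨c * z.re + (z ^ k).im * z.im, ?_⟩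
    rw [pow_succ, pow_succ, Zsqrtd.re_mul]
    linear_combination z.re * hc

lemma re_neg_one_pow_mul_sq {d : ℤ} (k : ℕ) (z : ℤ√d) :
    ((-1) ^ k * z).re ^ 2 = z.re ^ 2 := by
  rcases neg_one_pow_eq_or (ℤ√d) k with h | h <;> simp [h]

/-- The element `δ = 1 + √e` for `e = -(1 + 4a) = 1 - 2n`, where `n = 2a + 1`; powers of `γ` are
studied through its square `δ² = 2γ`. -/
def oneAddSqrt (a : ℤ) : ℤ√(-(1 + 4 * a)) := ⟨1, 1⟩

/-- The element `γ = -2a + √e = (1 + √e)² / 2` for `e = -(1 + 4a)`. With `n = 2a + 1` it is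
`(1 - n) + √(1 - 2n)`, the only candidate for a `p`-th root of
`(1 - n ^ p) + √(1 - 2 n ^ p)`. -/
def halfSqOneAddSqrt (a : ℤ) : ℤ√(-(1 + 4 * a)) := ⟨-2 * a, 1⟩

lemma oneAddSqrt_sq (a : ℤ) : oneAddSqrt a ^ 2 = 2 * halfSqOneAddSqrt a := by
  ext <;> simp only [pow_two, oneAddSqrt, halfSqOneAddSqrt, Zsqrtd.re_mul, Zsqrtd.im_mul,
    Zsqrtd.re_ofNat, Zsqrtd.im_ofNat] <;> push_cast <;> ring

lemma halfSqOneAddSqrt_sq (a : ℤ) :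
    halfSqOneAddSqrt a ^ 2 = -(1 + 4 * (a * ⟨1 - a, 1⟩)) := by
  ext <;> simp only [pow_two, halfSqOneAddSqrt, Zsqrtd.re_mul, Zsqrtd.im_mul, Zsqrtd.smul_val,
    Zsqrtd.re_add, Zsqrtd.im_add, Zsqrtd.re_neg, Zsqrtd.im_neg, Zsqrtd.re_one, Zsqrtd.im_one,
    Zsqrtd.re_ofNat, Zsqrtd.im_ofNat] <;> push_cast <;> ring

lemma halfSqOneAddSqrt_pow_two_mul (a : ℤ) (k : ℕ) :
    halfSqOneAddSqrt a ^ (2 * k) = (-1) ^ k * (1 + 4 * (a * ⟨1 - a, 1⟩)) ^ k := by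
  rw [pow_mul, halfSqOneAddSqrt_sq, neg_pow]

/-- `Re(γ²ᵏδ) = ±(1 - 20ka² + …)`, where the omitted terms are more divisible by `2` than
`20ka²` is. -/
lemma re_halfSqOneAddSqrt_pow_even_mul_sq_ne_one {a : ℤ} (ha : a ≠ 0) {k : ℕ} (hk : k ≠ 0) :
    (halfSqOneAddSqrt a ^ (2 * k) * oneAddSqrt a).re ^ 2 ≠ 1 := by
  rw [halfSqOneAddSqrt_pow_two_mul, mul_assoc, re_neg_one_pow_mul_sq]
  set v : ℤ√(-(1 + 4 * a)) := ⟨1 - a, 1⟩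
  obtain ⟨s, o, ho, rfl⟩ := Nat.exists_eq_two_pow_mul_odd hk
  obtain ⟨z, hz⟩ :=
    two_pow_mul_sq_dvd_one_add_four_mul_pow_sub (a * v) (dvd_mul_right (2 ^ s) o)
  have expansion : (1 + 4 * (a * v)) ^ (2 ^ s * o) * oneAddSqrt a = oneAddSqrt a
      + ((2 ^ s * o * 4 * a : ℤ) : ℤ√(-(1 + 4 * a))) * (oneAddSqrt a * v)
      + ((2 ^ (s + 3) * a ^ 2 : ℤ) : ℤ√(-(1 + 4 * a))) * (v ^ 2 * z * oneAddSqrt a) := by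
    rw [sub_eq_iff_eq_add.mp hz]
    push_cast
    ring
  have re_mul_v : (oneAddSqrt a * v).re = -5 * a := by
    simp only [oneAddSqrt, v, Zsqrtd.re_mul]
    ring
  obtain ⟨y, hy⟩ : ∃ y, ((1 + 4 * (a * v)) ^ (2 ^ s * o) * oneAddSqrt a).re
      = 1 + 4 * (2 ^ s * a ^ 2 * (-5 * o + 2 * y)) := by
    refine ⟨(v ^ 2 * z * oneAddSqrt a).re, ?_⟩
    rw [expansion, Zsqrtd.re_add, Zsqrtd.re_add, Zsqrtd.re_smul, Zsqrtd.re_smul, re_mul_v,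
      show (oneAddSqrt a).re = 1 from rfl]
    ring
  have correction_ne_zero : (2 : ℤ) ^ s * a ^ 2 * (-5 * o + 2 * y) ≠ 0 := by
    refine mul_ne_zero (by positivity) ?_
    obtain ⟨j, rfl⟩ := ho
    omega
  rw [hy, Ne, sq_eq_one_iff]
  omega

lemma four_mul_dvd_re_one_add_four_mul_pow_mul_sub {d : ℤ} (a : ℤ) (v z : ℤ√d) (k : ℕ) :
    4 * a ∣ ((1 + 4 * (a * v)) ^ k * z).re - z.re := by
  have dvd_pow_sub_one : ((4 * a : ℤ) : ℤ√d) ∣ (1 + 4 * (a * v)) ^ k - 1 := by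
    refine Dvd.dvd.trans ⟨v, ?_⟩ (sub_one_dvd_pow_sub_one _ k)
    push_cast
    ring
  have := ((Zsqrtd.intCast_dvd _ _).mp (dvd_pow_sub_one.mul_right z)).1
  rwa [sub_one_mul, Zsqrtd.re_sub] at this

lemma re_halfSqOneAddSqrt_one_pow_odd_mul_emod (k : ℕ) :
    (halfSqOneAddSqrt 1 ^ (2 * k + 1) * oneAddSqrt 1).re % 24 = 17 ∨
      (halfSqOneAddSqrt 1 ^ (2 * k + 1) * oneAddSqrt 1).re % 24 = 11 := by
  suffices h : (halfSqOneAddSqrt 1 ^ (2 * k + 1) * oneAddSqrt 1).re % 24 = 17 ∧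
        (halfSqOneAddSqrt 1 ^ (2 * k + 1) * oneAddSqrt 1).im % 24 = 23 ∨
      (halfSqOneAddSqrt 1 ^ (2 * k + 1) * oneAddSqrt 1).re % 24 = 11 ∧
        (halfSqOneAddSqrt 1 ^ (2 * k + 1) * oneAddSqrt 1).im % 24 = 5 from
    h.imp And.left And.left
  induction k with
  | zero => decide
  | succ k ih =>
    have sq_eq : halfSqOneAddSqrt 1 ^ 2 = ⟨-1, -4⟩ := by decide
    rw [show 2 * (k + 1) + 1 = 2 + (2 * k + 1) by ring, pow_add, mul_assoc, sq_eq]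
    generalize halfSqOneAddSqrt 1 ^ (2 * k + 1) * oneAddSqrt 1 = z at ih ⊢
    simp only [Zsqrtd.re_mul, Zsqrtd.im_mul]
    omega

lemma re_halfSqOneAddSqrt_pow_odd_mul_sq_ne_one {a : ℤ} (ha : 1 ≤ a) (k : ℕ) :
    (halfSqOneAddSqrt a ^ (2 * k + 1) * oneAddSqrt a).re ^ 2 ≠ 1 := by
  rcases ha.eq_or_lt with rfl | ha
  · have := re_halfSqOneAddSqrt_one_pow_odd_mul_emod k
    rw [Ne, sq_eq_one_iff]
    omega
  · have re_mul : (halfSqOneAddSqrt a * oneAddSqrt a).re = -1 - 6 * a := by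
      simp only [halfSqOneAddSqrt, oneAddSqrt, Zsqrtd.re_mul]
      ring
    obtain ⟨c, hc⟩ := four_mul_dvd_re_one_add_four_mul_pow_mul_sub a ⟨1 - a, 1⟩
      (halfSqOneAddSqrt a * oneAddSqrt a) k
    rw [re_mul] at hc
    rw [pow_succ (halfSqOneAddSqrt a), halfSqOneAddSqrt_pow_two_mul, mul_assoc, mul_assoc,
      re_neg_one_pow_mul_sq, Ne, sq_eq_one_iff]
    rintro (h | h) <;> rw [h] at hc
    · have : a * (2 * c - 3) = 1 := by linarith
      have := Int.eq_one_or_neg_one_of_mul_eq_one this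
      omega
    · have : 2 * c = 3 := mul_left_cancel₀ (by omega : a ≠ 0) (by linarith)
      omega

lemma re_halfSqOneAddSqrt_pow_mul_sq_ne_one {a : ℤ} (ha : 1 ≤ a) {h : ℕ} (hh : h ≠ 0) :
    (halfSqOneAddSqrt a ^ h * oneAddSqrt a).re ^ 2 ≠ 1 := by
  rcases Nat.even_or_odd' h with ⟨k, rfl | rfl⟩
  · exact re_halfSqOneAddSqrt_pow_even_mul_sq_ne_one (by omega) (by omega)
  · exact re_halfSqOneAddSqrt_pow_odd_mul_sq_ne_one ha k

/-- Writing `R + S√e = γʰδ`, the real part of `(γʰδ)² = 2γ²ʰ⁺¹` and the norm of `γʰδ` give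
`R² + eS²` and `R² - eS²`; their sum is `2`. -/
lemma re_halfSqOneAddSqrt_pow_mul_sq_eq_one {a : ℤ} {h : ℕ}
    (hre : (halfSqOneAddSqrt a ^ (2 * h + 1)).re = 1 - (2 * a + 1) ^ (2 * h + 1)) :
    (halfSqOneAddSqrt a ^ h * oneAddSqrt a).re ^ 2 = 1 := by
  have sq_eq : (halfSqOneAddSqrt a ^ h * oneAddSqrt a) ^ 2
      = ((2 : ℤ) : ℤ√(-(1 + 4 * a))) * halfSqOneAddSqrt a ^ (2 * h + 1) := by
    rw [mul_pow, oneAddSqrt_sq]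
    push_cast
    ring
  have norm_eq : (halfSqOneAddSqrt a ^ h * oneAddSqrt a).norm = 2 * (2 * a + 1) ^ (2 * h + 1) := by
    have norm_pow : (halfSqOneAddSqrt a ^ h).norm = (halfSqOneAddSqrt a).norm ^ h :=
      map_pow Zsqrtd.normMonoidHom _ h
    have norm_halfSq : (halfSqOneAddSqrt a).norm = (2 * a + 1) ^ 2 := by
      simp only [Zsqrtd.norm_def, halfSqOneAddSqrt]
      ring
    have norm_oneAdd : (oneAddSqrt a).norm = 2 * (2 * a + 1) := by
      simp only [Zsqrtd.norm_def, oneAddSqrt]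
      ring
    rw [Zsqrtd.norm_mul, norm_pow, norm_halfSq, norm_oneAdd, ← pow_mul]
    ring
  have re_sq_eq := congrArg Zsqrtd.re sq_eq
  rw [Zsqrtd.re_smul, hre, pow_two, Zsqrtd.re_mul] at re_sq_eq
  rw [Zsqrtd.norm_def] at norm_eq
  linarith

/-- Modulo `x + n`, which divides `e = x² - n²`, both `Re((x + √e) ^ p)` and `-n ^ p` are `x ^ p`.
If the real part is `1 - n ^ p`, then `x + n` is a unit, which leaves only `x = 1 - n`. -/
lemma re_pow_ne_one_sub_pow {n x k : ℤ} (hn : Odd n) (hn1 : 1 < n) (hk : 0 < k)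
    (hnorm : x ^ 2 + k = n ^ 2) {p : ℕ} (hp : Odd p) (hp1 : p ≠ 1) :
    ((⟨x, 1⟩ : ℤ√(-k)) ^ p).re ≠ 1 - n ^ p := by
  intro hre
  have dvd_one : x + n ∣ 1 := by
    have dvd_neg_k : x + n ∣ -k := ⟨x - n, by linear_combination -hnorm⟩
    have dvd_re_sub : x + n ∣ ((⟨x, 1⟩ : ℤ√(-k)) ^ p).re - x ^ p :=
      dvd_neg_k.trans (dvd_re_pow_sub_re_pow _ p)
    have := dvd_re_sub.add (hp.add_dvd_pow_add_pow x n)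
    rwa [hre, show 1 - n ^ p - x ^ p + (x ^ p + n ^ p) = 1 by ring] at this
  have hx : x = 1 - n := by
    rcases Int.isUnit_iff.mp (isUnit_of_dvd_one dvd_one) with h | h
    · linarith
    · nlinarith
  obtain ⟨a, rfl⟩ := hn
  obtain ⟨h, rfl⟩ := hp
  obtain rfl : k = 1 + 4 * a := by
    rw [hx] at hnorm
    linarith
  obtain rfl : x = -2 * a := by linarith
  exact re_halfSqOneAddSqrt_pow_mul_sq_ne_one (by omega) (by omega)
    (re_halfSqOneAddSqrt_pow_mul_sq_eq_one hre)

lemma sqrtC_re_of_neg {d : ℤ} (hd : d < 0) : (sqrtC d).re = 0 := by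
  have hd' : (d : ℝ) < 0 := by exact_mod_cast hd
  have hre := congrArg Complex.re (sqrtC_sq d)
  have him := congrArg Complex.im (sqrtC_sq d)
  simp only [pow_two, Complex.mul_re, Complex.mul_im, Complex.intCast_re,
    Complex.intCast_im] at hre him
  have : (sqrtC d).re * (sqrtC d).im = 0 := by linarith
  refine (mul_eq_zero.mp this).resolve_right fun h => ?_
  rw [h] at hre
  nlinarith [mul_self_nonneg (sqrtC d).re]

lemma sqrtC_im_sq_of_neg {d : ℤ} (hd : d < 0) : (sqrtC d).im ^ 2 = -d := by
  have := congrArg Complex.re (sqrtC_sq d)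
  simp only [pow_two, Complex.mul_re, sqrtC_re_of_neg hd, Complex.intCast_re] at this
  linarith

lemma sqrtC_im_ne_zero_of_neg {d : ℤ} (hd : d < 0) : (sqrtC d).im ≠ 0 := by
  have : (sqrtC d).im ^ 2 ≠ 0 := by
    rw [sqrtC_im_sq_of_neg hd]
    exact_mod_cast neg_ne_zero.mpr hd.ne
  exact pow_ne_zero_iff two_ne_zero |>.mp this

lemma exists_rat_add_mul_sqrtC_of_mem_Qsqrt {d : ℤ} {z : ℂ} (hz : z ∈ Qsqrt d) :
    ∃ a b : ℚ, z = a + b * sqrtC d := by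
  replace hz : z ∈ Algebra.adjoin ℚ {sqrtC d} := by
    rwa [← IntermediateField.adjoin_simple_toSubalgebra_of_isAlgebraic
      (isIntegral_sqrtC d).isAlgebraic]
  induction hz using Algebra.adjoin_induction with
  | mem x hx => exact ⟨0, 1, by simpa using hx⟩
  | algebraMap r => exact ⟨r, 0, by simp⟩
  | add x y _ _ hx hy =>
    obtain ⟨a, b, rfl⟩ := hx
    obtain ⟨a', b', rfl⟩ := hy
    exact ⟨a + a', b + b', by push_cast; ring⟩
  | mul x y _ _ hx hy =>
    obtain ⟨a, b, rfl⟩ := hx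
    obtain ⟨a', b', rfl⟩ := hy
    refine ⟨a * a' + b * b' * d, a * b' + b * a', ?_⟩
    push_cast
    linear_combination (b * b' : ℂ) * sqrtC_sq d

lemma exists_int_eq_of_isIntegral_ratCast {r : ℚ} (h : IsIntegral ℤ (r : ℂ)) :
    ∃ k : ℤ, r = k := by
  rw [← eq_ratCast (algebraMap ℚ ℂ), isIntegral_algebraMap_iff (algebraMap ℚ ℂ).injective] at h
  exact (IsIntegrallyClosed.isIntegral_iff.mp h).imp fun _ => Eq.symm

/-- Otherwise `(A² - 4N)d` is `3` modulo `4` and equals the square of `2bd`. -/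
lemma even_of_sq_sub_four_mul_eq {A N d : ℤ} {b : ℚ} (hd : d % 4 = 3)
    (h : (A : ℚ) ^ 2 - 4 * N = 4 * b ^ 2 * d) : Even A := by
  by_contra hA
  have A_sq_emod : A ^ 2 % 4 = 1 := Int.sq_mod_four_eq_one_of_odd (Int.not_even_iff_odd.mp hA)
  have isSquare : IsSquare ((A ^ 2 - 4 * N) * d) := by
    refine Rat.isSquare_intCast_iff.mp ⟨2 * b * d, ?_⟩
    push_cast
    rw [h]
    ring
  have emod_four : (A ^ 2 - 4 * N) * d % 4 = 3 := by
    rw [Int.mul_emod, hd, show (A ^ 2 - 4 * N) % 4 = 1 by omega]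
    rfl
  obtain ⟨f, hf⟩ := isSquare
  rw [hf, ← pow_two] at emod_four
  rcases Int.even_or_odd f with h | h
  · obtain ⟨j, rfl⟩ := even_iff_exists_two_mul.mp h
    rw [mul_pow] at emod_four
    omega
  · have := Int.sq_mod_four_eq_one_of_odd h
    omega

lemma isIntegral_coe_complex {K : IntermediateField ℚ ℂ} (w : 𝓞 K) :
    IsIntegral ℤ ((w : K) : ℂ) :=
  w.2.map K.val.toRingHom.toIntAlgHom

lemma exists_int_re_eq_im_sq_eq {d : ℤ} (hd : d < 0) (hd4 : d % 4 = 3) (w : 𝓞 (Qsqrt d)) :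
    ∃ x k : ℤ, ((w : Qsqrt d) : ℂ).re = x ∧ ((w : Qsqrt d) : ℂ).im ^ 2 = k := by
  obtain ⟨a, b, hab⟩ := exists_rat_add_mul_sqrtC_of_mem_Qsqrt (w : Qsqrt d).2
  have integral := isIntegral_coe_complex w
  generalize ((w : Qsqrt d) : ℂ) = z at hab integral ⊢
  have conj_integral : IsIntegral ℤ ((starRingEnd ℂ) z) :=
    integral.map (starRingEnd ℂ).toIntAlgHom
  have re_eq : z.re = a := by simp [hab, sqrtC_re_of_neg hd]
  have im_sq_eq : z.im ^ 2 = -(b ^ 2 * d) := by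
    have : z.im = b * (sqrtC d).im := by simp [hab]
    rw [this, mul_pow, sqrtC_im_sq_of_neg hd]
    ring
  obtain ⟨A, hA⟩ : ∃ A : ℤ, 2 * a = A := by
    have trace_integral := integral.add conj_integral
    rw [Complex.add_conj, re_eq] at trace_integral
    exact exists_int_eq_of_isIntegral_ratCast (by exact_mod_cast trace_integral)
  obtain ⟨N, hN⟩ : ∃ N : ℤ, a ^ 2 - b ^ 2 * d = N := by
    have norm_integral := integral.mul conj_integral
    rw [Complex.mul_conj, Complex.normSq_apply, ← pow_two, ← pow_two, re_eq, im_sq_eq,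
      ← sub_eq_add_neg] at norm_integral
    exact exists_int_eq_of_isIntegral_ratCast (by exact_mod_cast norm_integral)
  obtain ⟨x, rfl⟩ : Even A := by
    refine even_of_sq_sub_four_mul_eq (b := b) (N := N) hd4 ?_
    rw [← hA, ← hN]
    ring
  have a_eq : a = x := by
    push_cast at hA
    linarith
  refine ⟨x, N - x ^ 2, by rw [re_eq, a_eq, Rat.cast_intCast], ?_⟩
  have : -(b ^ 2 * d) = ((N - x ^ 2 : ℤ) : ℚ) := by
    push_cast
    rw [← hN, a_eq]
    ring
  rw [im_sq_eq]
  exact_mod_cast this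

lemma normSq_eq_of_re_eq_of_im_sq_eq {z : ℂ} {x k : ℤ} (hre : z.re = x) (him : z.im ^ 2 = k) :
    Complex.normSq z = ((x ^ 2 + k : ℤ) : ℝ) := by
  rw [Complex.normSq_apply, ← pow_two, ← pow_two, hre, him]
  push_cast
  rfl

lemma pow_four_eq_one_of_normSq_eq_one {z : ℂ} {x k : ℤ} (hre : z.re = x) (him : z.im ^ 2 = k)
    (hz : Complex.normSq z = 1) : z ^ 4 = 1 := by
  have sum_eq : x ^ 2 + k = 1 := by
    rw [normSq_eq_of_re_eq_of_im_sq_eq hre him] at hz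
    exact_mod_cast hz
  have hk : 0 ≤ k := by
    have : (0 : ℝ) ≤ k := him ▸ sq_nonneg z.im
    exact_mod_cast this
  have x_or_k : x = 0 ∨ k = 0 := by
    refine or_iff_not_imp_left.mpr fun hx => ?_
    have : 0 < x ^ 2 := by positivity
    omega
  have sq_eq : z ^ 2 = ((x ^ 2 - k : ℤ) : ℂ) := by
    apply Complex.ext
    · simp [pow_two, hre, ← him]
    · rcases x_or_k with rfl | rfl
      · simp [pow_two, hre]
      · have : z.im = 0 := by simpa using him
        simp [pow_two, this]
  have sub_sq : (x ^ 2 - k) ^ 2 = 1 := by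
    rcases x_or_k with rfl | rfl <;> nlinarith
  rw [show 4 = 2 * 2 from rfl, pow_mul, sq_eq]
  exact_mod_cast sub_sq

lemma units_pow_four_eq_one {d : ℤ} (hd : d < 0) (hd4 : d % 4 = 3) (u : (𝓞 (Qsqrt d))ˣ) :
    u ^ 4 = 1 := by
  obtain ⟨x, k, hre, him⟩ := exists_int_re_eq_im_sq_eq hd hd4 (u : 𝓞 (Qsqrt d))
  obtain ⟨x', k', hre', him'⟩ := exists_int_re_eq_im_sq_eq hd hd4 (↑u⁻¹ : 𝓞 (Qsqrt d))
  have mul_inv : (((u : 𝓞 (Qsqrt d)) : Qsqrt d) : ℂ) *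
      (((↑u⁻¹ : 𝓞 (Qsqrt d)) : Qsqrt d) : ℂ) = 1 := by
    exact_mod_cast congrArg (fun w : 𝓞 (Qsqrt d) => ((w : Qsqrt d) : ℂ)) u.mul_inv
  have normSq_eq := normSq_eq_of_re_eq_of_im_sq_eq hre him
  have normSq_eq_one : Complex.normSq (((u : 𝓞 (Qsqrt d)) : Qsqrt d) : ℂ) = 1 := by
    have := congrArg Complex.normSq mul_inv
    rw [map_mul, map_one, normSq_eq, normSq_eq_of_re_eq_of_im_sq_eq hre' him'] at this
    have nonneg : 0 ≤ x ^ 2 + k := by exact_mod_cast normSq_eq ▸ Complex.normSq_nonneg _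
    rw [normSq_eq, Int.eq_one_of_mul_eq_one_right nonneg (by exact_mod_cast this), Int.cast_one]
  have := pow_four_eq_one_of_normSq_eq_one hre him normSq_eq_one
  apply Units.ext
  apply RingOfIntegers.ext
  apply Subtype.ext
  simpa using this

lemma im_ne_zero_of_im_pow_ne_zero {z : ℂ} {p : ℕ} (h : (z ^ p).im ≠ 0) : z.im ≠ 0 := by
  contrapose! h
  rw [← Complex.re_add_im z, h, Complex.ofReal_zero, zero_mul, add_zero, ← Complex.ofReal_pow,
    Complex.ofReal_im]

lemma re_pow_zsqrtd_eq_re_pow {z : ℂ} {x k : ℤ} (hre : z.re = x) (him : z.im ^ 2 = k) (p : ℕ) :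
    (((⟨x, 1⟩ : ℤ√(-k)) ^ p).re : ℝ) = (z ^ p).re := by
  suffices h : (z ^ p).re = ((⟨x, 1⟩ : ℤ√(-k)) ^ p).re ∧
      (z ^ p).im = ((⟨x, 1⟩ : ℤ√(-k)) ^ p).im * z.im from h.1.symm
  induction p with
  | zero => simp
  | succ p ih =>
    simp only [pow_succ, Complex.mul_re, Complex.mul_im, Zsqrtd.re_mul, Zsqrtd.im_mul, ih.1, ih.2,
      hre]
    push_cast
    rw [← him]
    constructor <;> ring

/-- The square root of `d` as an algebraic integer of `ℚ(√d)`. -/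
noncomputable def sqrtInt (d : ℤ) : 𝓞 (Qsqrt d) :=
  ⟨⟨sqrtC d, IntermediateField.mem_adjoin_simple_self ℚ _⟩, by
    refine IsIntegral.of_pow two_pos ?_
    have sq_eq : (⟨sqrtC d, IntermediateField.mem_adjoin_simple_self ℚ _⟩ : Qsqrt d) ^ 2 = d :=
      Subtype.ext (by simpa using sqrtC_sq d)
    exact sq_eq ▸ isIntegral_algebraMap (R := ℤ)⟩

lemma coe_sqrtInt (d : ℤ) : ((sqrtInt d : Qsqrt d) : ℂ) = sqrtC d := rfl

lemma sqrtInt_sq (d : ℤ) : sqrtInt d ^ 2 = d := by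
  apply RingOfIntegers.ext
  apply Subtype.ext
  simpa [coe_sqrtInt] using sqrtC_sq d

lemma one_sub_two_mul_pow_neg {n : ℤ} (hn1 : 1 < n) {p : ℕ} (hp : p ≠ 0) : 1 - 2 * n ^ p < 0 := by
  have := one_lt_pow₀ hn1 hp
  omega

lemma one_sub_two_mul_emod_four {n : ℤ} (hn : Odd n) : (1 - 2 * n) % 4 = 3 := by
  obtain ⟨j, rfl⟩ := hn
  omega

lemma pow_ne_one_sub_pow_add_sqrtInt {d n : ℤ} {p : ℕ} (hn : Odd n) (hn1 : 1 < n) (hp : Odd p)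
    (hp1 : p ≠ 1) (hd : d = 1 - 2 * n ^ p) (w : 𝓞 (Qsqrt d)) :
    w ^ p ≠ 1 - (n : 𝓞 (Qsqrt d)) ^ p + sqrtInt d := by
  have d_neg : d < 0 := hd ▸ one_sub_two_mul_pow_neg hn1 hp.pos.ne'
  have d_emod : d % 4 = 3 := hd ▸ one_sub_two_mul_emod_four hn.pow
  intro h
  obtain ⟨x, k, hre, him⟩ := exists_int_re_eq_im_sq_eq d_neg d_emod w
  have root : ((w : Qsqrt d) : ℂ) ^ p = ((1 - n ^ p : ℤ) : ℂ) + sqrtC d := by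
    have := congrArg (fun w : 𝓞 (Qsqrt d) => ((w : Qsqrt d) : ℂ)) h
    simpa [coe_sqrtInt] using this
  generalize ((w : Qsqrt d) : ℂ) = z at root hre him
  have re_root : (z ^ p).re = ((1 - n ^ p : ℤ) : ℝ) := by
    rw [root, Complex.add_re, sqrtC_re_of_neg d_neg, Complex.intCast_re, add_zero]
  have im_root : (z ^ p).im = (sqrtC d).im := by
    rw [root, Complex.add_im, Complex.intCast_im, zero_add]
  have norm_eq : x ^ 2 + k = n ^ 2 := by
    have normSq_pow : Complex.normSq z ^ p = ((1 - n ^ p : ℤ) : ℝ) ^ 2 - d := by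
      rw [← map_pow, Complex.normSq_apply, ← pow_two, ← pow_two, re_root, im_root,
        sqrtC_im_sq_of_neg d_neg, ← sub_eq_add_neg]
    rw [normSq_eq_of_re_eq_of_im_sq_eq hre him] at normSq_pow
    have : (x ^ 2 + k) ^ p = (n ^ 2) ^ p := by
      have : (x ^ 2 + k) ^ p = (1 - n ^ p) ^ 2 - d := by exact_mod_cast normSq_pow
      rw [this, hd]
      ring
    exact hp.strictMono_pow.injective this
  have k_pos : 0 < k := by
    have im_ne_zero : z.im ≠ 0 :=
      im_ne_zero_of_im_pow_ne_zero (im_root ▸ sqrtC_im_ne_zero_of_neg d_neg)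
    have : (0 : ℝ) < k := him ▸ sq_pos_of_ne_zero im_ne_zero
    exact_mod_cast this
  refine re_pow_ne_one_sub_pow hn hn1 k_pos norm_eq hp hp1 ?_
  exact_mod_cast (re_pow_zsqrtd_eq_re_pow hre him p).trans re_root

lemma isCoprime_one_sub_add_one_sub_sub {R : Type*} [CommRing R] {y s : R} (hy : IsCoprime y 2)
    (hs : s ^ 2 = 1 - 2 * y) : IsCoprime (1 - y + s) (1 - y - s) := by
  have mul_eq : (1 - y + s) * (1 - y - s) = y ^ 2 := by linear_combination -hs
  have add_eq : (1 - y + s) + (1 - y - s) = 2 * (1 - y) := by ring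
  have coprime_one_sub : IsCoprime y (1 - y) := ⟨1, 1, by ring⟩
  have : IsCoprime ((1 - y + s) * (1 - y - s)) ((1 - y + s) + (1 - y - s)) := by
    rw [mul_eq, add_eq]
    exact (hy.mul_right coprime_one_sub).pow_left
  convert this.of_mul_left_left.add_mul_left_right (-1) using 1
  ring

lemma exists_pow_eq_of_associated_pow {M : Type*} [CommMonoid M] (hM : ∀ u : Mˣ, u ^ 4 = 1)
    {p : ℕ} (hp : Odd p) {g b : M} (h : Associated (g ^ p) b) : ∃ w, w ^ p = b := by
  obtain ⟨u, rfl⟩ := h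
  obtain ⟨k, rfl⟩ := hp
  have u_eq : (u ^ (2 * k + 1)) ^ (2 * k + 1) = u := by
    rw [← pow_mul, show (2 * k + 1) * (2 * k + 1) = 4 * (k * k + k) + 1 by ring, pow_succ, pow_mul,
      hM, one_pow, one_mul]
  refine ⟨g * (u ^ (2 * k + 1) : Mˣ), ?_⟩
  rw [mul_pow, ← Units.val_pow_eq_pow_val, u_eq]

lemma dvd_natCard_classGroup_of_mul_eq_pow {R : Type*} [CommRing R] [IsDedekindDomain R]
    {t : ℕ} (ht : 0 < t) {b b' c : R} (hcop : IsCoprime b b') (hmul : b * b' = c ^ t)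
    (hroot : ∀ p : ℕ, p.Prime → p ∣ t → ∀ g : R, ¬ Associated (g ^ p) b) :
    t ∣ Nat.card (ClassGroup R) := by
  rcases eq_or_ne t 1 with rfl | ht1
  · exact one_dvd _
  have hb : b ≠ 0 := by
    rintro rfl
    obtain ⟨p, hp, hpt⟩ := Nat.exists_prime_and_dvd ht1
    exact hroot p hp hpt 0 (by rw [zero_pow hp.ne_zero])
  obtain ⟨I, hI⟩ : ∃ I : Ideal R, Ideal.span {b} = I ^ t := by
    apply exists_eq_pow_of_mul_eq_pow_of_coprime (b := Ideal.span {b'}) (c := Ideal.span {c})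
    · exact (Ideal.isCoprime_span_singleton_iff b b').mpr hcop
    · rw [Ideal.span_singleton_mul_span_singleton, hmul, Ideal.span_singleton_pow]
  have hI0 : I ∈ nonZeroDivisors (Ideal R) := by
    apply mem_nonZeroDivisors_of_ne_zero
    rintro rfl
    rw [zero_pow ht.ne'] at hI
    exact hb (by simpa using hI)
  have pow_eq_one_iff (k : ℕ) : ClassGroup.mk0 ⟨I, hI0⟩ ^ k = 1 ↔ (I ^ k).IsPrincipal := by
    rw [← map_pow]
    exact ClassGroup.mk0_eq_one_iff _
  have orderOf_eq : orderOf (ClassGroup.mk0 ⟨I, hI0⟩) = t := by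
    apply orderOf_eq_of_pow_and_pow_div_prime ht
    · exact (pow_eq_one_iff t).mpr ⟨b, hI.symm⟩
    · intro p hp hpt hpow
      obtain ⟨g, hg⟩ := (pow_eq_one_iff _).mp hpow
      refine hroot p hp hpt g ?_
      rw [← Ideal.span_singleton_eq_span_singleton]
      calc Ideal.span {g ^ p} = (I ^ (t / p)) ^ p := by rw [← Ideal.span_singleton_pow, hg]
        _ = Ideal.span {b} := by rw [← pow_mul, Nat.div_mul_cancel hpt, hI]
  exact orderOf_eq ▸ orderOf_dvd_natCard _

lemma not_associated_pow_one_sub_pow_add_sqrtInt {d n : ℤ} {p : ℕ} (hn : Odd n) (hn1 : 1 < n)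
    (hp : Odd p) (hp1 : p ≠ 1) (hd : d = 1 - 2 * n ^ p) (g : 𝓞 (Qsqrt d)) :
    ¬ Associated (g ^ p) (1 - (n : 𝓞 (Qsqrt d)) ^ p + sqrtInt d) := by
  intro hg
  obtain ⟨w, hw⟩ := exists_pow_eq_of_associated_pow
    (units_pow_four_eq_one (hd ▸ one_sub_two_mul_pow_neg hn1 hp.pos.ne')
      (hd ▸ one_sub_two_mul_emod_four hn.pow)) hp hg
  exact pow_ne_one_sub_pow_add_sqrtInt hn hn1 hp hp1 hd w hw

theorem t_dvd_classNumber_of_odd_prime_power_general {t m : ℕ} (ht : Odd t) (hm : Odd m)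
    (hm1 : 1 < m) : t ∣ NumberField.classNumber (Qsqrt (1 - 2 * (m : ℤ) ^ t)) := by
  generalize hd : 1 - 2 * (m : ℤ) ^ t = d
  have sqrtInt_sq_eq : sqrtInt d ^ 2 = 1 - 2 * (m : 𝓞 (Qsqrt d)) ^ t := by
    rw [sqrtInt_sq, ← hd]
    push_cast
    rfl
  have isCoprime_two : IsCoprime ((m : 𝓞 (Qsqrt d)) ^ t) 2 := by
    exact_mod_cast (Nat.isCoprime_iff_coprime.mpr hm.coprime_two_right).pow_left.intCast
  have mul_eq : (1 - (m : 𝓞 (Qsqrt d)) ^ t + sqrtInt d) * (1 - (m : 𝓞 (Qsqrt d)) ^ t - sqrtInt d)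
      = ((m : 𝓞 (Qsqrt d)) ^ 2) ^ t := by
    linear_combination -sqrtInt_sq_eq
  rw [classNumber, ← Nat.card_eq_fintype_card]
  refine dvd_natCard_classGroup_of_mul_eq_pow ht.pos
    (isCoprime_one_sub_add_one_sub_sub isCoprime_two sqrtInt_sq_eq) mul_eq fun p hp hpt g => ?_
  have pow_div_pow : (m ^ (t / p)) ^ p = m ^ t := by rw [← pow_mul, Nat.div_mul_cancel hpt]
  have one_lt_pow_div : 1 < m ^ (t / p) :=
    one_lt_pow₀ hm1 (Nat.div_pos (Nat.le_of_dvd ht.pos hpt) hp.pos).ne'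
  have hd' : d = 1 - 2 * ((m ^ (t / p) : ℕ) : ℤ) ^ p := by
    rw [← hd, ← Nat.cast_pow, ← Nat.cast_pow, pow_div_pow]
  have := not_associated_pow_one_sub_pow_add_sqrtInt (hm.pow.natCast (R := ℤ))
    (by exact_mod_cast one_lt_pow_div) (ht.of_dvd_nat hpt) hp.ne_one hd' g
  rwa [Int.cast_natCast, ← Nat.cast_pow, pow_div_pow, Nat.cast_pow] at this

/-- For an odd square-free integer `t ≥ 3`, an odd prime `q`, a positive integer `r`
and `m = q ^ r`, the class number of `ℚ(√(1 - 2 m ^ t))` is divisible by `t`. -/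
theorem t_dvd_classNumber_of_odd_prime_power
    (t : ℕ) (ht3 : 3 ≤ t) (htodd : Odd t) (htsf : Squarefree t)
    (q : ℕ) (hq : q.Prime) (hqodd : Odd q) (r : ℕ) (hr : 0 < r)
    (m : ℕ) (hm : m = q ^ r) :
    t ∣ NumberField.classNumber (Qsqrt (1 - 2 * (m : ℤ) ^ t)) := by
  subst hm
  exact t_dvd_classNumber_of_odd_prime_power_general htodd hqodd.pow
    (Nat.one_lt_pow hr.ne' hq.one_lt)
end

section
/- Fix an odd square-free integer t ≥ 3. The set of square-free negative integers d such that d is the square-free part of 1 − 2q^{rt} for some odd prime q and positive integer r (so that ℚ(√d) = ℚ(√(1 − 2(q^r)^t)) and t divides the class number of ℚ(√d)) is infinite; i.e., the family of imaginary quadratic fields ℚ(√(1 − 2m^t)) with m an odd prime power, whose class numbers are all divisible by t, is an infinite family. -/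
open Polynomial NumberField

/-! Put `m = q ^ t` and `1 - 2 * m = n ^ 2 * d` with `d` squarefree, and let `β = n√d`, so that
`β ^ 2 = 1 - 2 * m`. The conjugate elements `1 - m ± β` are coprime with product
`m ^ 2 = (q ^ 2) ^ t`, hence `(1 - m + β) = I ^ t` for an ideal `I`. If the class of `I` had order
less than `t`, then `1 - m + β` would be a `p`-th power `b ^ p` for some prime `p = 2 * k + 1`
dividing `t`, the units being `±1`. Since `2 * (1 - m + β) = (1 + β) ^ 2`, we would get
`(2 ^ k * (1 + β)) ^ 2 = (2 * b) ^ p`, hence `2 ^ k * (1 + β) = g ^ p` with `g` integral. The trace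
`T` of `g` then divides the trace `2 ^ (k + 1)` of `g ^ p`, and the norm of `g`, a multiple of `q`,
divides `T ^ p - 2 ^ (k + 1)`, which is nonzero and smaller than `q` in absolute value
once `q` is large.

Infinitely many `d` occur because, by Dirichlet's theorem, arbitrarily large primes `ℓ` divide some
`2 * q ^ t - 1` exactly once, and such an `ℓ` divides `d`. -/

section Arithmetic

theorem dvd_of_dvd_sq_mul {M : Type*} [CommMonoidWithZero M] {p n e : M} (hp : Prime p)
    (h : p ∣ n ^ 2 * e) (h' : ¬p ^ 2 ∣ n ^ 2 * e) : p ∣ e :=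
  (hp.dvd_or_dvd h).resolve_left fun hn ↦
    h' ((pow_dvd_pow_of_dvd (hp.dvd_of_dvd_pow hn) 2).mul_right e)

theorem exists_squarefree_ge_of_prime_dvd {ℓ N : ℕ} (hℓ : ℓ.Prime) (hdvd : ℓ ∣ N)
    (hndvd : ¬ℓ ^ 2 ∣ N) : ∃ e ≥ ℓ, Squarefree e ∧ ∃ n > 0, n ^ 2 * e = N := by
  have hN : 0 < N := Nat.pos_of_ne_zero fun h ↦ hndvd (h ▸ dvd_zero _)
  obtain ⟨e, n, he, hn, rfl, hsf⟩ := Nat.sq_mul_squarefree_of_pos hN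
  exact ⟨e, Nat.le_of_dvd he (dvd_of_dvd_sq_mul hℓ.prime hdvd hndvd), hsf, n, hn, rfl⟩

theorem odd_of_two_pow_lt {k q : ℕ} (hq : q.Prime) (hk : k ≠ 0) (hkq : 2 ^ k < q) : Odd q :=
  hq.odd_of_ne_two fun h ↦ hkq.not_ge (h ▸ Nat.le_self_pow hk 2)

theorem mul_dvd_add_pow_sub {R : Type*} [CommRing R] (x y : R) {n : ℕ} (hn : n ≠ 0) :
    x * y ∣ (x + y) ^ n - (x ^ n + y ^ n) := by
  obtain ⟨m, rfl⟩ := Nat.exists_eq_add_one_of_ne_zero hn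
  induction m with
  | zero => simp
  | succ m ih =>
    obtain ⟨c, hc⟩ := ih m.succ_ne_zero
    exact ⟨(x + y) * c + x ^ m + y ^ m, by linear_combination (x + y) * hc⟩

theorem pow_ne_prime_pow {ℓ m p : ℕ} (hℓ : ℓ.Prime) (hm : m ≠ 0) (hmp : m < p) (T : ℤ) :
    T ^ p ≠ (ℓ : ℤ) ^ m := by
  intro h
  have hℓT : (ℓ : ℤ) ∣ T := Int.Prime.dvd_pow' hℓ (h ▸ dvd_pow_self _ hm)
  have hdvd : (ℓ : ℤ) ^ p ∣ (ℓ : ℤ) ^ m := h ▸ pow_dvd_pow_of_dvd hℓT p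
  exact hmp.not_ge ((Nat.pow_dvd_pow_iff_le_right hℓ.one_lt).mp (by exact_mod_cast hdvd))

theorem not_dvd_pow_sub_prime_pow {ℓ m p : ℕ} (hℓ : ℓ.Prime) (hm : m ≠ 0) (hmp : m < p)
    {T q : ℤ} (hT : T ∣ (ℓ : ℤ) ^ m) (hq : 2 * (ℓ : ℤ) ^ (m * p) < q) :
    ¬q ∣ T ^ p - (ℓ : ℤ) ^ m := by
  intro hdvd
  have hℓ1 : (1 : ℤ) ≤ ℓ := by exact_mod_cast hℓ.one_le
  have hTle : |T| ≤ (ℓ : ℤ) ^ m := Int.le_of_dvd (by positivity) ((abs_dvd _ _).mpr hT)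
  have hlt : |T ^ p - (ℓ : ℤ) ^ m| < q := calc
    |T ^ p - (ℓ : ℤ) ^ m| ≤ |T| ^ p + (ℓ : ℤ) ^ m := by
      simpa only [abs_pow, Nat.abs_cast] using abs_sub (T ^ p) ((ℓ : ℤ) ^ m)
    _ ≤ ((ℓ : ℤ) ^ m) ^ p + (ℓ : ℤ) ^ (m * p) := by
      gcongr
      exacts [Nat.le_mul_of_pos_right m (Nat.zero_lt_of_lt hmp)]
    _ = 2 * (ℓ : ℤ) ^ (m * p) := by rw [← pow_mul, two_mul]
    _ < q := hq
  exact pow_ne_prime_pow hℓ hm hmp T (sub_eq_zero.mp (Int.eq_zero_of_abs_lt_dvd hdvd hlt))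

end Arithmetic

section PrimesInProgressions

theorem exists_prime_gt_coprime_totient_pow {t : ℕ} (ht : Odd t) (k M : ℕ) :
    ∃ ℓ > M, ℓ.Prime ∧ (ℓ ^ k).totient.Coprime t := by
  -- A prime `ℓ ≡ 2 [MOD t]` works, since `φ (ℓ ^ (k + 1)) = ℓ ^ k * (ℓ - 1)`.
  obtain ⟨ℓ, hℓ, hℓp, hmod⟩ := Nat.forall_exists_prime_gt_and_modEq (M + t) ht.pos.ne'
    (Nat.coprime_two_left.mpr ht)
  have hℓt : ℓ.Coprime t :=
    hℓp.coprime_iff_not_dvd.mpr fun h ↦ by have := Nat.le_of_dvd ht.pos h; omega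
  have hmod' : ℓ - 1 ≡ 1 [MOD t] :=
    Nat.ModEq.add_right_cancel' 1 (by rwa [Nat.sub_add_cancel hℓp.one_le])
  have hℓ1t : (ℓ - 1).Coprime t := by simpa [Nat.Coprime] using hmod'.gcd_eq
  refine ⟨ℓ, by omega, hℓp, ?_⟩
  cases k with
  | zero => simp
  | succ k =>
    rw [Nat.totient_prime_pow_succ hℓp]
    exact (hℓt.pow_left k).mul_left hℓ1t

theorem exists_prime_gt_pow_eq {N t : ℕ} [NeZero N] (h : N.totient.Coprime t) (u : (ZMod N)ˣ)
    (K : ℕ) : ∃ q > K, q.Prime ∧ (q : ZMod N) ^ t = u := by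
  have hcard : (Nat.card (ZMod N)ˣ).Coprime t := by
    rwa [Nat.card_eq_fintype_card, ZMod.card_units_eq_totient]
  obtain ⟨x, hx⟩ := (powCoprime hcard).surjective u
  obtain ⟨q, hq, hqp, hqx⟩ := Nat.forall_exists_prime_gt_and_eq_mod x.isUnit K
  exact ⟨q, hq, hqp, by rw [hqx, ← hx, powCoprime_apply, Units.val_pow_eq_pow_val]⟩

theorem exists_prime_dvd_two_mul_pow_sub_one {t : ℕ} (ht : Odd t) (M K : ℕ) :
    ∃ ℓ > M, ∃ q > K, ℓ.Prime ∧ q.Prime ∧ ℓ ∣ 2 * q ^ t - 1 ∧ ¬ℓ ^ 2 ∣ 2 * q ^ t - 1 := by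
  obtain ⟨ℓ, hℓ, hℓp, hcop⟩ := exists_prime_gt_coprime_totient_pow ht 2 (M + 2)
  have : NeZero (ℓ ^ 2) := ⟨pow_ne_zero _ hℓp.ne_zero⟩
  have h2 : Nat.Coprime 2 (ℓ ^ 2) :=
    ((Nat.coprime_primes Nat.prime_two hℓp).mpr (by omega)).pow_right 2
  have h1ℓ : Nat.Coprime (1 + ℓ) (ℓ ^ 2) := Nat.Coprime.pow_right 2 (by simp)
  obtain ⟨q, hq, hqp, hqt⟩ := exists_prime_gt_pow_eq hcop
    ((ZMod.unitOfCoprime 2 h2)⁻¹ * ZMod.unitOfCoprime (1 + ℓ) h1ℓ) K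
  have hmod : 2 * q ^ t ≡ 1 + ℓ [MOD ℓ ^ 2] := by
    rw [← ZMod.natCast_eq_natCast_iff, Nat.cast_mul, Nat.cast_pow, hqt,
      ← ZMod.coe_unitOfCoprime 2 h2, ← Units.val_mul, mul_inv_cancel_left,
      ZMod.coe_unitOfCoprime]
  have hmod' : 2 * q ^ t - 1 ≡ ℓ [MOD ℓ ^ 2] := by
    refine Nat.ModEq.add_left_cancel' 1 ?_
    rwa [Nat.add_sub_cancel' (Nat.mul_pos two_pos (pow_pos hqp.pos t))]
  refine ⟨ℓ, by omega, q, hq, hℓp, hqp, ?_, fun h ↦ ?_⟩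
  · exact (hmod'.dvd_iff (dvd_pow_self ℓ two_ne_zero)).mpr dvd_rfl
  · have hdvd : ℓ ^ 2 ∣ ℓ ^ 1 := by simpa using (hmod'.dvd_iff dvd_rfl).mp h
    exact absurd ((Nat.pow_dvd_pow_iff_le_right hℓp.one_lt).mp hdvd) (by norm_num)

end PrimesInProgressions

section CommutativeAlgebra

variable {R : Type*} [CommRing R]

theorem isCoprime_one_sub_add {m β : R} (h2 : IsCoprime 2 m) (hβ : β ^ 2 = 1 - 2 * m) :
    IsCoprime (1 - m + β) (1 - m - β) := by
  have hm : IsCoprime (2 * (1 - m)) m :=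
    h2.mul_left ⟨1, 1, by ring⟩
  have hprod : IsCoprime (2 * (1 - m)) ((1 - m + β) * (1 - m - β)) := by
    rw [show (1 - m + β) * (1 - m - β) = m ^ 2 by linear_combination -hβ]
    exact hm.pow_right
  have hsum : IsCoprime ((1 - m - β) + (1 - m + β) * 1) (1 - m + β) := by
    rw [show (1 - m - β) + (1 - m + β) * 1 = 2 * (1 - m) by ring]
    exact hprod.of_mul_right_left
  exact hsum.of_add_mul_left_left.symm

theorem exists_eq_pow_of_pow_eq_pow_of_coprime [IsDomain R] [IsIntegrallyClosed R] {x y : R}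
    {m n : ℕ} (hmn : m.Coprime n) (h : x ^ m = y ^ n) : ∃ z, x = z ^ n ∧ y = z ^ m := by
  obtain rfl | hm := eq_or_ne m 0
  · obtain rfl : n = 1 := by simpa using hmn
    exact ⟨x, (pow_one x).symm, by simpa using h.symm⟩
  let K := FractionRing R
  have hinj := IsFractionRing.injective R K
  obtain ⟨c, hx, hy⟩ := (pow_eq_pow_iff_of_coprime (a := algebraMap R K x)
    (b := algebraMap R K y) hmn).mp (by rw [← map_pow, h, map_pow])
  have hc : IsIntegral R c := .of_pow hm.bot_lt (hy ▸ isIntegral_algebraMap)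
  obtain ⟨z, rfl⟩ := IsIntegrallyClosed.isIntegral_iff.mp hc
  exact ⟨z, hinj (by rw [hx, map_pow]), hinj (by rw [hy, map_pow])⟩

variable [IsDedekindDomain R]

theorem exists_span_singleton_eq_pow {a b c : R} {t : ℕ} (hab : IsCoprime a b)
    (h : a * b = c ^ t) : ∃ I : Ideal R, Ideal.span {a} = I ^ t :=
  exists_eq_pow_of_mul_eq_pow_of_coprime ((Ideal.isCoprime_span_singleton_iff a b).mpr hab)
    (c := Ideal.span {c}) (by
      rw [Ideal.span_singleton_mul_span_singleton, Ideal.span_singleton_pow, h])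

theorem orderOf_mk0_eq_of_span_singleton_eq_pow {a : R} {t : ℕ} (ht : t ≠ 0)
    (I : nonZeroDivisors (Ideal R)) (hI : Ideal.span {a} = (I : Ideal R) ^ t)
    (ha : ∀ p, p.Prime → p ∣ t → ∀ b : R, ¬Associated (b ^ p) a) :
    orderOf (ClassGroup.mk0 I) = t := by
  have hpow (m : ℕ) : ClassGroup.mk0 I ^ m = 1 ↔ ((I : Ideal R) ^ m).IsPrincipal := by
    rw [← map_pow]
    exact ClassGroup.mk0_eq_one_iff (I ^ m).2
  refine orderOf_eq_of_pow_and_pow_div_prime ht.bot_lt ((hpow t).mpr ⟨a, hI.symm⟩) ?_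
  intro p hp hpt hone
  obtain ⟨b, hb : (I : Ideal R) ^ (t / p) = Ideal.span {b}⟩ := (hpow _).mp hone
  refine ha p hp hpt b (Ideal.span_singleton_eq_span_singleton.mp ?_)
  rw [← Ideal.span_singleton_pow, ← hb, ← pow_mul, Nat.div_mul_cancel hpt, hI]

end CommutativeAlgebra

section RingOfIntegers

variable {K : Type*} [Field K] [CharZero K]

theorem exists_eq_intCast_of_coe_eq_ratCast {z : 𝓞 K} {x : ℚ} (h : (z : K) = x) :
    ∃ m : ℤ, z = m := by
  have hx : IsIntegral ℤ x := (isIntegral_algebraMap_iff (algebraMap ℚ K).injective).mp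
    (by rw [eq_ratCast, ← h]; exact z.isIntegral_coe)
  obtain ⟨m, hm⟩ := IsIntegrallyClosed.isIntegral_iff.mp hx
  exact ⟨m, RingOfIntegers.ext (by rw [h, ← hm]; simp)⟩

theorem intCast_dvd_intCast_iff {a b : ℤ} : (a : 𝓞 K) ∣ (b : 𝓞 K) ↔ a ∣ b := by
  refine ⟨fun ⟨c, hc⟩ ↦ ?_, fun h ↦ by exact_mod_cast map_dvd (Int.castRingHom (𝓞 K)) h⟩
  obtain rfl | ha := eq_or_ne a 0
  · rw [Int.cast_zero, zero_mul, Int.cast_eq_zero] at hc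
    rw [hc]
  have haK : (a : K) ≠ 0 := Int.cast_ne_zero.mpr ha
  have hcK : (c : K) = ((b / a : ℚ) : K) := by
    rw [Rat.cast_div, Rat.cast_intCast, Rat.cast_intCast, eq_div_iff haK, mul_comm]
    simpa using (congrArg (algebraMap (𝓞 K) K) hc).symm
  obtain ⟨m, rfl⟩ := exists_eq_intCast_of_coe_eq_ratCast hcK
  exact ⟨m, by exact_mod_cast hc⟩

end RingOfIntegers

namespace Qsqrt

variable {d : ℤ}

theorem sqrtC_mem (d : ℤ) : sqrtC d ∈ Qsqrt d :=
  IntermediateField.mem_adjoin_simple_self ℚ _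

theorem exists_eq_ratCast_add_mul_sqrtC {z : ℂ} (hz : z ∈ Qsqrt d) :
    ∃ x y : ℚ, z = x + y * sqrtC d := by
  rw [← IntermediateField.mem_toSubalgebra, Qsqrt,
    IntermediateField.adjoin_simple_toSubalgebra_of_isAlgebraic (isIntegral_sqrtC d).isAlgebraic]
    at hz
  induction hz using Algebra.adjoin_induction with
  | mem x hx => exact ⟨0, 1, by simpa using hx⟩
  | algebraMap r => exact ⟨r, 0, by simp⟩
  | add _ _ _ _ hz hw =>
    obtain ⟨⟨a, b, rfl⟩, ⟨a', b', rfl⟩⟩ := hz, hw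
    exact ⟨a + a', b + b', by push_cast; ring⟩
  | mul _ _ _ _ hz hw =>
    obtain ⟨⟨a, b, rfl⟩, ⟨a', b', rfl⟩⟩ := hz, hw
    exact ⟨a * a' + b * b' * d, a * b' + b * a', by
      push_cast; linear_combination (b * b' : ℂ) * sqrtC_sq d⟩

theorem starRingEnd_sqrtC_eq_or_eq_neg (d : ℤ) :
    starRingEnd ℂ (sqrtC d) = sqrtC d ∨ starRingEnd ℂ (sqrtC d) = -sqrtC d :=
  sq_eq_sq_iff_eq_or_eq_neg.mp (by rw [← map_pow, sqrtC_sq, map_intCast])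

theorem starRingEnd_sqrtC_of_neg (hd : d < 0) : starRingEnd ℂ (sqrtC d) = -sqrtC d := by
  refine (starRingEnd_sqrtC_eq_or_eq_neg d).resolve_left fun hreal ↦ ?_
  obtain ⟨r, hr⟩ := Complex.conj_eq_iff_real.mp hreal
  have hsq : r ^ 2 = d := by exact_mod_cast hr ▸ sqrtC_sq d
  exact (sq_nonneg r).not_gt (hsq ▸ by exact_mod_cast hd)

theorem starRingEnd_mem {z : ℂ} (hz : z ∈ Qsqrt d) : starRingEnd ℂ z ∈ Qsqrt d := by
  obtain ⟨x, y, rfl⟩ := exists_eq_ratCast_add_mul_sqrtC hz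
  have hs : starRingEnd ℂ (sqrtC d) ∈ Qsqrt d := by
    rcases starRingEnd_sqrtC_eq_or_eq_neg d with h | h <;> rw [h]
    exacts [sqrtC_mem d, neg_mem (sqrtC_mem d)]
  rw [map_add, map_mul, map_ratCast, map_ratCast]
  exact add_mem (SubfieldClass.ratCast_mem _ x) (mul_mem (SubfieldClass.ratCast_mem _ y) hs)

/-- Complex conjugation on the ring of integers of `ℚ(√d)`; for `d < 0` this is the nontrivial
Galois automorphism, and for `d ≥ 0` it is the identity. -/
noncomputable def conj (d : ℤ) : 𝓞 (Qsqrt d) →+* 𝓞 (Qsqrt d) :=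
  RingOfIntegers.mapRingHom
    (((starRingEnd ℂ).comp (algebraMap (Qsqrt d) ℂ)).codRestrict (Qsqrt d)
      fun z ↦ starRingEnd_mem z.2)

/-- `√d` as an algebraic integer of `ℚ(√d)`. -/
noncomputable def sqrtInt (d : ℤ) : 𝓞 (Qsqrt d) :=
  ⟨⟨sqrtC d, sqrtC_mem d⟩, .of_pow two_pos (by
    rw [show (⟨sqrtC d, sqrtC_mem d⟩ : Qsqrt d) ^ 2 = algebraMap ℤ (Qsqrt d) d from
      Subtype.ext (by simpa using sqrtC_sq d)]
    exact isIntegral_algebraMap)⟩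

theorem coe_injective : Function.Injective fun z : 𝓞 (Qsqrt d) ↦ ((z : Qsqrt d) : ℂ) :=
  Subtype.val_injective.comp RingOfIntegers.coe_injective

@[simp]
theorem coe_conj (z : 𝓞 (Qsqrt d)) :
    ((conj d z : Qsqrt d) : ℂ) = starRingEnd ℂ ((z : Qsqrt d) : ℂ) := rfl

@[simp]
theorem coe_sqrtInt (d : ℤ) : ((sqrtInt d : Qsqrt d) : ℂ) = sqrtC d := rfl

@[simp]
theorem conj_conj (z : 𝓞 (Qsqrt d)) : conj d (conj d z) = z :=
  coe_injective (by simp)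

theorem sqrtInt_sq (d : ℤ) : sqrtInt d ^ 2 = d :=
  coe_injective (by simpa using sqrtC_sq d)

theorem conj_sqrtInt (hd : d < 0) : conj d (sqrtInt d) = -sqrtInt d :=
  coe_injective (by simpa using starRingEnd_sqrtC_of_neg hd)

theorem exists_eq_intCast_of_conj_eq (hd : d < 0) {z : 𝓞 (Qsqrt d)} (hz : conj d z = z) :
    ∃ m : ℤ, z = m := by
  obtain ⟨x, y, hxy⟩ := exists_eq_ratCast_add_mul_sqrtC (z : Qsqrt d).2
  have hconj : (x : ℂ) + y * -sqrtC d = x + y * sqrtC d := by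
    have := congrArg (fun w : 𝓞 (Qsqrt d) ↦ ((w : Qsqrt d) : ℂ)) hz
    simpa [hxy, starRingEnd_sqrtC_of_neg hd] using this
  have hzx : ((z : Qsqrt d) : ℂ) = x := by linear_combination hxy - hconj / 2
  exact exists_eq_intCast_of_coe_eq_ratCast (Subtype.ext (by simpa using hzx))

theorem exists_intCast_eq_add_conj (hd : d < 0) (z : 𝓞 (Qsqrt d)) :
    ∃ T : ℤ, z + conj d z = T :=
  exists_eq_intCast_of_conj_eq hd (by rw [map_add, conj_conj, add_comm])

theorem exists_intCast_eq_mul_conj (hd : d < 0) (z : 𝓞 (Qsqrt d)) :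
    ∃ N : ℤ, z * conj d z = N :=
  exists_eq_intCast_of_conj_eq hd (by rw [map_mul, conj_conj, mul_comm])

theorem sqrtInt_ne_zero (hd : d ≠ 0) : sqrtInt d ≠ 0 :=
  fun h ↦ hd (by simpa [h, eq_comm] using sqrtInt_sq d)

theorem exists_sub_conj_eq_mul_sqrtInt (hd : d < 0) (hsf : Squarefree d) (z : 𝓞 (Qsqrt d)) :
    ∃ c : ℤ, z - conj d z = c * sqrtInt d := by
  obtain ⟨D, hD⟩ := exists_eq_intCast_of_conj_eq hd (z := (z - conj d z) ^ 2) (by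
    rw [map_pow, map_sub, conj_conj]; ring)
  obtain ⟨m, hm⟩ := exists_eq_intCast_of_conj_eq hd (z := (z - conj d z) * sqrtInt d) (by
    rw [map_mul, map_sub, conj_conj, conj_sqrtInt hd]; ring)
  have hmD : m ^ 2 = d * D := by
    have : (m : 𝓞 (Qsqrt d)) ^ 2 = d * D := by rw [← hm, ← hD, mul_pow, sqrtInt_sq, mul_comm]
    exact_mod_cast this
  obtain ⟨c, rfl⟩ : d ∣ m := (hsf.dvd_pow_iff_dvd two_ne_zero).mp ⟨D, hmD⟩
  refine ⟨c, mul_right_cancel₀ (sqrtInt_ne_zero hd.ne) ?_⟩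
  rw [hm, mul_assoc, ← sq, sqrtInt_sq, Int.cast_mul, mul_comm]

theorem unit_eq_one_or_eq_neg_one (hd : d < -4) (hsf : Squarefree d) (u : (𝓞 (Qsqrt d))ˣ) :
    (u : 𝓞 (Qsqrt d)) = 1 ∨ (u : 𝓞 (Qsqrt d)) = -1 := by
  have hd0 : d < 0 := by omega
  obtain ⟨T, hT⟩ := exists_intCast_eq_add_conj hd0 (u : 𝓞 (Qsqrt d))
  obtain ⟨N, hN⟩ := exists_intCast_eq_mul_conj hd0 (u : 𝓞 (Qsqrt d))
  obtain ⟨c, hc⟩ := exists_sub_conj_eq_mul_sqrtInt hd0 hsf (u : 𝓞 (Qsqrt d))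
  have hdisc : T ^ 2 - 4 * N = c ^ 2 * d := by
    have : (T : 𝓞 (Qsqrt d)) ^ 2 - 4 * N = c ^ 2 * d := by
      rw [← hT, ← hN, ← sqrtInt_sq, ← mul_pow, ← hc]; ring
    exact_mod_cast this
  have hNunit : IsUnit N := isUnit_iff_dvd_one.mpr <| intCast_dvd_intCast_iff.mp <| by
    rw [← hN, Int.cast_one]
    exact (u.isUnit.mul (u.isUnit.map (conj d))).dvd
  have hN1 : N ≤ 1 := by rcases Int.isUnit_iff.mp hNunit with h | h <;> omega
  obtain rfl : c = 0 := by
    by_contra hc0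
    have : 0 < c ^ 2 := by positivity
    nlinarith [sq_nonneg T]
  obtain rfl : N = 1 := by
    rcases Int.isUnit_iff.mp hNunit with h | rfl
    exacts [h, absurd (sq_nonneg T) (by linarith)]
  have hconj : conj d u = u := (sub_eq_zero.mp (by simpa using hc)).symm
  rwa [hconj, Int.cast_one, mul_self_eq_one_iff] at hN

theorem exists_dvd_of_pow_add_conj_pow_eq (hd : d < 0) {p : ℕ} (hp : Odd p) {g : 𝓞 (Qsqrt d)}
    {V : ℤ} (hV : g ^ p + conj d g ^ p = V) :
    ∃ T N : ℤ, g * conj d g = N ∧ T ∣ V ∧ N ∣ T ^ p - V := by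
  obtain ⟨T, hT⟩ := exists_intCast_eq_add_conj hd g
  obtain ⟨N, hN⟩ := exists_intCast_eq_mul_conj hd g
  refine ⟨T, N, hN, ?_, ?_⟩ <;> rw [← intCast_dvd_intCast_iff (K := Qsqrt d)]
  · rw [← hT, ← hV]
    exact hp.add_dvd_pow_add_pow _ _
  · rw [Int.cast_sub, Int.cast_pow, ← hT, ← hN, ← hV]
    exact mul_dvd_add_pow_sub _ _ hp.pos.ne'

theorem pow_ne_one_sub_add (hd : d < 0) {p q : ℕ} (hp : Odd p) (hp1 : 1 < p) (hq : q.Prime)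
    (hpq : 2 ^ (p ^ 2 + 1) < q) {m : ℤ} (hqm : (q : ℤ) ∣ m) {β : 𝓞 (Qsqrt d)}
    (hconj : conj d β = -β) (hβ : β ^ 2 = 1 - 2 * m) (b : 𝓞 (Qsqrt d)) :
    b ^ p ≠ 1 - m + β := by
  intro hb
  obtain ⟨k, rfl⟩ := hp
  have hsq : (2 ^ k * (1 + β)) ^ 2 = (2 * b) ^ (2 * k + 1) := by
    rw [mul_pow 2 b, hb]
    linear_combination (2 ^ k) ^ 2 * hβ
  obtain ⟨g, hg, -⟩ := exists_eq_pow_of_pow_eq_pow_of_coprime (by simp) hsq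
  have hgconj : conj d g ^ (2 * k + 1) = 2 ^ k * (1 - β) := by
    rw [← map_pow, ← hg, map_mul, map_pow, map_add, map_one, map_ofNat, hconj, sub_eq_add_neg]
  obtain ⟨T, N, hN, hTV, hNV⟩ :=
    exists_dvd_of_pow_add_conj_pow_eq (V := 2 ^ (k + 1)) hd ⟨k, rfl⟩ (g := g) (by
      rw [hgconj, ← hg]; push_cast; ring)
  have hNpow : N ^ (2 * k + 1) = 2 ^ (2 * k + 1) * m := by
    have : (N : 𝓞 (Qsqrt d)) ^ (2 * k + 1) = 2 ^ (2 * k + 1) * m := by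
      rw [← hN, mul_pow, hgconj, ← hg]
      linear_combination -(2 ^ k) ^ 2 * hβ
    exact_mod_cast this
  have hqN : (q : ℤ) ∣ N := Int.Prime.dvd_pow' hq (hNpow ▸ hqm.mul_left _)
  have hexp : (k + 1) * (2 * k + 1) ≤ (2 * k + 1) ^ 2 := by nlinarith
  have hlarge : 2 * (2 : ℤ) ^ ((k + 1) * (2 * k + 1)) < q := calc
    2 * (2 : ℤ) ^ ((k + 1) * (2 * k + 1)) = 2 ^ ((k + 1) * (2 * k + 1) + 1) := by ring
    _ ≤ 2 ^ ((2 * k + 1) ^ 2 + 1) := pow_le_pow_right₀ one_le_two (by gcongr)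
    _ < q := by exact_mod_cast hpq
  exact not_dvd_pow_sub_prime_pow Nat.prime_two k.succ_ne_zero (by omega) hTV hlarge
    (hqN.trans hNV)

theorem exists_classGroup_orderOf_eq (hd : d < -4) (hsf : Squarefree d) {t q : ℕ} (ht : Odd t)
    (hq : q.Prime) (htq : 2 ^ (t ^ 2 + 1) < q) {n : ℤ} (hn : 1 - 2 * (q : ℤ) ^ t = n ^ 2 * d) :
    ∃ c : ClassGroup (𝓞 (Qsqrt d)), orderOf c = t := by
  have hd0 : d < 0 := by omega
  have ht0 : t ≠ 0 := ht.pos.ne'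
  set m : ℤ := (q : ℤ) ^ t with hm
  set β : 𝓞 (Qsqrt d) := n * sqrtInt d
  have hconj : conj d β = -β := by rw [map_mul, map_intCast, conj_sqrtInt hd0, mul_neg]
  have hβ : β ^ 2 = 1 - 2 * m := by
    rw [mul_pow, sqrtInt_sq]
    exact_mod_cast congrArg (Int.cast : ℤ → 𝓞 (Qsqrt d)) hn.symm
  have hcop : IsCoprime (2 : 𝓞 (Qsqrt d)) m := by
    have hqodd : Odd q := odd_of_two_pow_lt hq (Nat.succ_ne_zero _) htq
    have h2 : IsCoprime (2 : ℤ) m :=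
      (Nat.isCoprime_iff_coprime.mpr hqodd.coprime_two_left).pow_right
    simpa using h2.map (Int.castRingHom (𝓞 (Qsqrt d)))
  have hmul : (1 - m + β) * (1 - m - β) = ((q : 𝓞 (Qsqrt d)) ^ 2) ^ t := by
    rw [pow_right_comm, show (q : 𝓞 (Qsqrt d)) ^ t = m by simp [hm]]
    linear_combination -hβ
  obtain ⟨I, hI⟩ := exists_span_singleton_eq_pow (isCoprime_one_sub_add hcop hβ) hmul
  have hI0 : I ≠ 0 := by
    rintro rfl
    rw [zero_pow ht0, Submodule.zero_eq_bot, Ideal.span_singleton_eq_bot] at hI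
    rw [hI, zero_mul] at hmul
    exact pow_ne_zero t (pow_ne_zero 2 (Nat.cast_ne_zero.mpr hq.ne_zero)) hmul.symm
  refine ⟨_, orderOf_mk0_eq_of_span_singleton_eq_pow ht0
    ⟨I, mem_nonZeroDivisors_of_ne_zero hI0⟩ hI ?_⟩
  rintro p hp hpt b ⟨u, hu⟩
  have hpodd : Odd p := ht.of_dvd_nat hpt
  have hpq : 2 ^ (p ^ 2 + 1) < q := htq.trans_le' <| Nat.pow_le_pow_right two_pos <|
    Nat.succ_le_succ (Nat.pow_le_pow_left (Nat.le_of_dvd ht.pos hpt) 2)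
  have hne := pow_ne_one_sub_add hd0 hpodd hp.one_lt hq hpq (dvd_pow_self _ ht0) hconj hβ
  rcases unit_eq_one_or_eq_neg_one hd hsf u with h | h
  · exact hne b (by rw [← hu, h, mul_one])
  · exact hne (-b) (by rw [← hu, h, hpodd.neg_pow, mul_neg_one])

end Qsqrt

theorem infinite_family_with_t_dvd_classNumber_general (t : ℕ) (ht : Odd t) :
    {d : ℤ | Squarefree d ∧ d < 0 ∧
      (∃ q r : ℕ, q.Prime ∧ Odd q ∧ 0 < r ∧
        ∃ n : ℤ, 0 < n ∧ 1 - 2 * ((q : ℤ) ^ r) ^ t = n ^ 2 * d) ∧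
      t ∣ NumberField.classNumber (Qsqrt d)}.Infinite := by
  refine Set.infinite_of_forall_exists_lt fun M ↦ ?_
  obtain ⟨ℓ, hℓM, q, htq, hℓ, hq, hdvd, hndvd⟩ :=
    exists_prime_dvd_two_mul_pow_sub_one ht (M.natAbs + 4) (2 ^ (t ^ 2 + 1))
  obtain ⟨e, hℓe, hesf, n, hn0, hne⟩ := exists_squarefree_ge_of_prime_dvd hℓ hdvd hndvd
  have hsf : Squarefree (-e : ℤ) := by rwa [← Int.squarefree_natAbs, Int.natAbs_neg]
  have hn : 1 - 2 * (q : ℤ) ^ t = (n : ℤ) ^ 2 * (-e) := by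
    have hne' : n ^ 2 * e + 1 = 2 * q ^ t := by
      rw [hne, Nat.sub_add_cancel (Nat.mul_pos two_pos (pow_pos hq.pos t))]
    zify at hne'
    linear_combination hne'
  obtain ⟨c, hc⟩ := Qsqrt.exists_classGroup_orderOf_eq (by omega) hsf ht hq htq hn
  refine ⟨-e, ⟨hsf, by omega, ⟨q, 1, hq, ?_, one_pos, n, by exact_mod_cast hn0, ?_⟩, ?_⟩, by omega⟩
  · exact odd_of_two_pow_lt hq (Nat.succ_ne_zero _) htq
  · rwa [pow_one]
  · exact hc ▸ orderOf_dvd_card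

/-- For a fixed odd square-free integer `t ≥ 3`, the family of imaginary quadratic fields
`ℚ(√(1 - 2 (q ^ r) ^ t))` (with `q` an odd prime and `r ≥ 1`), described via the square-free
parts `d` of the integers `1 - 2 (q ^ r) ^ t`, is infinite, and `t` divides the class number
of every field in this family. -/
theorem infinite_family_with_t_dvd_classNumber
    (t : ℕ) (ht3 : 3 ≤ t) (htodd : Odd t) (htsf : Squarefree t) :
    {d : ℤ | Squarefree d ∧ d < 0 ∧
      (∃ q r : ℕ, q.Prime ∧ Odd q ∧ 0 < r ∧
        ∃ n : ℤ, 0 < n ∧ 1 - 2 * ((q : ℤ) ^ r) ^ t = n ^ 2 * d) ∧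
      t ∣ NumberField.classNumber (Qsqrt d)}.Infinite := by
  exact infinite_family_with_t_dvd_classNumber_general t htodd
end
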